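/- arXiv:2108.09061 — 3 statements merged into one kernel-verified Lean document; each statement's English description precedes it below -/
import Mathlib

section
/- Let N be a positive integer and let S' ⊊ S ⊆ Fin N with S' nonempty. Set θ = arcsin √(|S'|/|S|) and r = ⌊π/(4θ)⌋, and let ψ_S be the uniform superposition over S, O_{S'} the oracle flipping the sign of basis states in S', and G = R_{ψ_S} ∘ O_{S'} the restricted Grover operator. Then: (i) r ≤ (π/4)·√(|S|/|S'|); (ii) ∑_{i ∈ S'} |⟨e i, G^r ψ_S⟩|² ≥ 1 − |S'|/|S| (a marked state is measured with high probability); and (iii) ⟨e i, G^r ψ_S⟩ = 0 for every i ∉ S (states outside the restricted search space are never measured). -/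
open scoped InnerProductSpace

/-- The uniform superposition `ψ_T = (1/√|T|) ∑_{i∈T} e i` over a finite set `T` of
basis indices. -/
noncomputable def uniformSuperposition {ι : Type*} [Fintype ι] [DecidableEq ι]
    (T : Finset ι) : EuclideanSpace ℂ ι :=
  (Real.sqrt T.card)⁻¹ • ∑ i ∈ T, EuclideanSpace.single i (1 : ℂ)

/-- The oracle `O_{S'}`, flipping the sign of the basis states indexed by `S'`. -/
noncomputable def groverOracle {ι : Type*} [Fintype ι] [DecidableEq ι] (S' : Finset ι)
    (x : EuclideanSpace ℂ ι) : EuclideanSpace ℂ ι :=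
  WithLp.toLp 2 fun i => if i ∈ S' then -x i else x i

/-- The groverReflection `R_ψ : x ↦ 2⟨ψ, x⟩ψ − x` about a vector `ψ`. -/
noncomputable def groverReflection {ι : Type*} [Fintype ι]
    (ψ : EuclideanSpace ℂ ι) (x : EuclideanSpace ℂ ι) : EuclideanSpace ℂ ι :=
  (2 : ℂ) • ⟪ψ, x⟫_ℂ • ψ - x

/-!
Every iterate stays in the plane spanned by `ψ_{S'}` and `ψ_{S \ S'}`. With `θ` as in the theorem,
`ψ_S` is the vector of that plane at angle `θ` from `ψ_{S \ S'}`. The oracle maps the vector at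
angle `φ` to the one at angle `-φ`, and the reflection about `ψ_S` maps it to the one at angle
`2 * θ - φ`. Hence `G` is the rotation by `2 * θ`, and `G^r ψ_S` sits at angle `(2 * r + 1) * θ`,
where the probability of measuring a marked state is `sin ((2 * r + 1) * θ) ^ 2`. The choice of `r`
puts this angle within `θ` of `π / 2`.
-/

section Trigonometry

variable {θ : ℝ}

theorem floor_pi_div_four_mul_le (hθ : 0 < θ) (hθπ : θ < Real.pi) :
    (⌊Real.pi / (4 * θ)⌋₊ : ℝ) ≤ Real.pi / 4 * (Real.sin θ)⁻¹ := by
  have sin_pos : 0 < Real.sin θ := Real.sin_pos_of_pos_of_lt_pi hθ hθπ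
  calc (⌊Real.pi / (4 * θ)⌋₊ : ℝ) ≤ Real.pi / (4 * θ) := Nat.floor_le (by positivity)
    _ = Real.pi / 4 * θ⁻¹ := by rw [← div_div, div_eq_mul_inv]
    _ ≤ Real.pi / 4 * (Real.sin θ)⁻¹ := by gcongr; exact Real.sin_le hθ.le

theorem abs_two_mul_floor_add_one_mul_sub_pi_div_two_le (hθ : 0 < θ) :
    |(2 * ⌊Real.pi / (4 * θ)⌋₊ + 1) * θ - Real.pi / 2| ≤ θ := by
  have floor_le : ⌊Real.pi / (4 * θ)⌋₊ * (4 * θ) ≤ Real.pi :=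
    (le_div_iff₀ (by positivity)).1 (Nat.floor_le (by positivity))
  have lt_floor_add_one : Real.pi < (⌊Real.pi / (4 * θ)⌋₊ + 1) * (4 * θ) :=
    (div_lt_iff₀ (by positivity)).1 (Nat.lt_floor_add_one _)
  rw [abs_le]
  constructor <;> linarith

theorem cos_sq_le_sin_sq_two_mul_floor_add_one_mul (hθ : 0 < θ) (hθπ : θ ≤ Real.pi / 2) :
    Real.cos θ ^ 2 ≤ Real.sin ((2 * ⌊Real.pi / (4 * θ)⌋₊ + 1) * θ) ^ 2 := by
  rw [← Real.cos_sub_pi_div_two, ← Real.cos_abs (_ - _)]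
  have cos_nonneg : 0 ≤ Real.cos θ := Real.cos_nonneg_of_neg_pi_div_two_le_of_le (by linarith) hθπ
  gcongr
  exact Real.cos_le_cos_of_nonneg_of_le_pi (abs_nonneg _) (by linarith)
    (abs_two_mul_floor_add_one_mul_sub_pi_div_two_le hθ)

end Trigonometry

section Angle

variable {ι : Type*} {S' S : Finset ι}

/-- The angle `θ` between `ψ_S` and the unmarked direction `ψ_{S \ S'}`; half the rotation angle of
the restricted Grover operator. -/
noncomputable def groverAngle (S' S : Finset ι) : ℝ :=
  Real.arcsin √(S'.card / S.card)

theorem sin_groverAngle (h : S' ⊆ S) : Real.sin (groverAngle S' S) = √(S'.card / S.card) := by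
  have ratio_le_one : (S'.card / S.card : ℝ) ≤ 1 :=
    div_le_one_of_le₀ (Nat.cast_le.2 (Finset.card_le_card h)) (Nat.cast_nonneg _)
  exact Real.sin_arcsin (neg_one_lt_zero.le.trans (Real.sqrt_nonneg _))
    (Real.sqrt_le_one.2 ratio_le_one)

theorem groverAngle_pos (h : S' ⊆ S) (hne : S'.Nonempty) : 0 < groverAngle S' S := by
  have card_pos' : (0 : ℝ) < S'.card := Nat.cast_pos.2 hne.card_pos
  have card_pos : (0 : ℝ) < S.card := Nat.cast_pos.2 (hne.mono h).card_pos
  exact Real.arcsin_pos.2 (Real.sqrt_pos.2 (div_pos card_pos' card_pos))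

theorem groverAngle_le_pi_div_two (S' S : Finset ι) : groverAngle S' S ≤ Real.pi / 2 :=
  Real.arcsin_le_pi_div_two _

theorem cos_groverAngle [DecidableEq ι] (h : S' ⊆ S) (hS : S.Nonempty) :
    Real.cos (groverAngle S' S) = √((S \ S').card / S.card) := by
  have card_ne_zero : (S.card : ℝ) ≠ 0 := Nat.cast_ne_zero.2 hS.card_ne_zero
  rw [groverAngle, Real.cos_arcsin, Real.sq_sqrt (by positivity), Finset.cast_card_sdiff h,
    sub_div, div_self card_ne_zero]

end Angle

section Grover

variable {ι : Type*} [Fintype ι]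

theorem groverReflection_of_inner_eq_ofReal {ψ x : EuclideanSpace ℂ ι} {c : ℝ}
    (h : ⟪ψ, x⟫_ℂ = c) : groverReflection ψ x = (2 * c) • ψ - x := by
  rw [groverReflection, h, smul_smul, ← Complex.coe_smul (2 * c) ψ, Complex.ofReal_mul,
    Complex.ofReal_ofNat]

variable [DecidableEq ι]

theorem uniformSuperposition_apply (T : Finset ι) (i : ι) :
    uniformSuperposition T i = if i ∈ T then ((√T.card)⁻¹ : ℂ) else 0 := by
  simp [uniformSuperposition, Pi.single_apply]

theorem inner_uniformSuperposition (T : Finset ι) (x : EuclideanSpace ℂ ι) :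
    ⟪uniformSuperposition T, x⟫_ℂ = (√T.card)⁻¹ * ∑ i ∈ T, x i := by
  simp only [uniformSuperposition, ← Complex.coe_smul, inner_smul_left, sum_inner,
    EuclideanSpace.inner_single_left, Complex.conj_ofReal, map_one, one_mul]

theorem sum_uniformSuperposition_of_subset {S T : Finset ι} (h : T ⊆ S) :
    ∑ i ∈ S, uniformSuperposition T i = √T.card := by
  simp only [uniformSuperposition_apply, Finset.sum_ite_mem, Finset.inter_eq_right.2 h,
    Finset.sum_const, nsmul_eq_mul]
  rw [← div_eq_mul_inv]
  exact_mod_cast Real.div_sqrt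

theorem inner_uniformSuperposition_of_subset {S T : Finset ι} (h : T ⊆ S) :
    ⟪uniformSuperposition S, uniformSuperposition T⟫_ℂ = √(T.card / S.card : ℝ) := by
  rw [inner_uniformSuperposition, sum_uniformSuperposition_of_subset h,
    Real.sqrt_div (Nat.cast_nonneg _), Complex.ofReal_div, Complex.ofReal_inv,
    div_eq_inv_mul]

theorem sqrt_card_div_smul_uniformSuperposition_apply (S : Finset ι) {T : Finset ι} {i : ι}
    (hi : i ∈ T) :
    (√(T.card / S.card : ℝ) • uniformSuperposition T) i = ((√S.card)⁻¹ : ℂ) := by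
  have sqrt_card_ne_zero : (√T.card : ℂ) ≠ 0 := by
    have card_pos : 0 < T.card := Finset.card_pos.2 ⟨i, hi⟩
    exact_mod_cast (Real.sqrt_pos.2 (Nat.cast_pos.2 card_pos)).ne'
  rw [PiLp.smul_apply, uniformSuperposition_apply, if_pos hi, Complex.real_smul,
    Real.sqrt_div (Nat.cast_nonneg _), Complex.ofReal_div]
  field_simp

theorem uniformSuperposition_eq_add_sdiff {S' S : Finset ι} (h : S' ⊆ S) :
    uniformSuperposition S =
      √(S'.card / S.card : ℝ) • uniformSuperposition S' +
        √((S \ S').card / S.card : ℝ) • uniformSuperposition (S \ S') := by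
  ext i
  rw [PiLp.add_apply]
  by_cases hi' : i ∈ S'
  · rw [sqrt_card_div_smul_uniformSuperposition_apply S hi']
    simp [uniformSuperposition_apply, hi', h hi']
  by_cases hi : i ∈ S
  · rw [sqrt_card_div_smul_uniformSuperposition_apply S (Finset.mem_sdiff.2 ⟨hi, hi'⟩)]
    simp [uniformSuperposition_apply, hi, hi']
  · simp [uniformSuperposition_apply, hi, hi']

/-- The vector at angle `φ` from the unmarked direction `ψ_{S \ S'}` towards the marked direction
`ψ_{S'}`. If `S' = S` the unmarked direction is `0`. -/
noncomputable def groverState (S' S : Finset ι) (φ : ℝ) : EuclideanSpace ℂ ι :=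
  Real.sin φ • uniformSuperposition S' + Real.cos φ • uniformSuperposition (S \ S')

variable {S' S : Finset ι}

theorem groverState_apply_of_mem (S : Finset ι) (φ : ℝ) {i : ι} (hi : i ∈ S') :
    groverState S' S φ i = (Real.sin φ * (√S'.card)⁻¹ : ℝ) := by
  simp [groverState, uniformSuperposition_apply, hi]

theorem groverState_apply_of_notMem (h : S' ⊆ S) (φ : ℝ) {i : ι} (hi : i ∉ S) :
    groverState S' S φ i = 0 := by
  have hi' : i ∉ S' := fun hmem => hi (h hmem)
  simp [groverState, uniformSuperposition_apply, hi, hi']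

theorem sum_norm_sq_groverState (S : Finset ι) (hne : S'.Nonempty) (φ : ℝ) :
    ∑ i ∈ S', ‖groverState S' S φ i‖ ^ 2 = Real.sin φ ^ 2 := by
  have card_ne_zero : (S'.card : ℝ) ≠ 0 := Nat.cast_ne_zero.2 hne.card_ne_zero
  calc ∑ i ∈ S', ‖groverState S' S φ i‖ ^ 2
      = ∑ _i ∈ S', Real.sin φ ^ 2 * (S'.card : ℝ)⁻¹ := by
        refine Finset.sum_congr rfl fun i hi => ?_
        rw [groverState_apply_of_mem S φ hi, Complex.norm_real, Real.norm_eq_abs, sq_abs, mul_pow,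
          inv_pow, Real.sq_sqrt (Nat.cast_nonneg _)]
    _ = Real.sin φ ^ 2 := by
        rw [Finset.sum_const, nsmul_eq_mul]
        field_simp

theorem groverState_groverAngle (h : S' ⊆ S) (hS : S.Nonempty) :
    groverState S' S (groverAngle S' S) = uniformSuperposition S := by
  rw [groverState, sin_groverAngle h, cos_groverAngle h hS, uniformSuperposition_eq_add_sdiff h]

theorem inner_uniformSuperposition_groverState (h : S' ⊆ S) (hS : S.Nonempty) (φ : ℝ) :
    ⟪uniformSuperposition S, groverState S' S φ⟫_ℂ = Real.cos (φ - groverAngle S' S) := by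
  rw [groverState, inner_add_right, ← Complex.coe_smul, ← Complex.coe_smul, inner_smul_right,
    inner_smul_right, inner_uniformSuperposition_of_subset h,
    inner_uniformSuperposition_of_subset Finset.sdiff_subset, ← sin_groverAngle h,
    ← cos_groverAngle h hS, Real.cos_sub]
  push_cast
  ring

theorem groverOracle_groverState (S' S : Finset ι) (φ : ℝ) :
    groverOracle S' (groverState S' S φ) = groverState S' S (-φ) := by
  ext i
  by_cases hi : i ∈ S' <;> simp [groverOracle, groverState, uniformSuperposition_apply, hi]

theorem two_mul_cos_smul_groverState_sub (S' S : Finset ι) (θ φ : ℝ) :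
    (2 * Real.cos (φ - θ)) • groverState S' S θ - groverState S' S φ =
      groverState S' S (2 * θ - φ) := by
  have sin_eq : Real.sin (2 * θ - φ) = 2 * Real.cos (φ - θ) * Real.sin θ - Real.sin φ := by
    rw [Real.sin_sub, Real.cos_sub, Real.sin_two_mul, Real.cos_two_mul']
    linear_combination -Real.sin φ * Real.sin_sq_add_cos_sq θ
  have cos_eq : Real.cos (2 * θ - φ) = 2 * Real.cos (φ - θ) * Real.cos θ - Real.cos φ := by
    rw [Real.cos_sub, Real.cos_sub, Real.sin_two_mul, Real.cos_two_mul]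
    ring
  rw [groverState, groverState, groverState, sin_eq, cos_eq]
  module

theorem groverReflection_groverState (h : S' ⊆ S) (hS : S.Nonempty) (φ : ℝ) :
    groverReflection (uniformSuperposition S) (groverState S' S φ) =
      groverState S' S (2 * groverAngle S' S - φ) := by
  rw [groverReflection_of_inner_eq_ofReal (inner_uniformSuperposition_groverState h hS φ),
    ← groverState_groverAngle h hS, two_mul_cos_smul_groverState_sub]

theorem groverIterate_uniformSuperposition (h : S' ⊆ S) (hS : S.Nonempty) (k : ℕ) :
    (groverReflection (uniformSuperposition S) ∘ groverOracle S')^[k] (uniformSuperposition S) =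
      groverState S' S ((2 * k + 1) * groverAngle S' S) := by
  induction k with
  | zero => simp [groverState_groverAngle h hS]
  | succ k ih =>
    rw [Function.iterate_succ_apply', ih, Function.comp_apply, groverOracle_groverState,
      groverReflection_groverState h hS]
    congr 1
    push_cast
    ring

theorem restricted_grover_search_general (h : S' ⊆ S) (hne : S'.Nonempty)
    {θ : ℝ} (hθ : θ = Real.arcsin √(S'.card / S.card))
    {r : ℕ} (hr : r = ⌊Real.pi / (4 * θ)⌋₊)
    {G : EuclideanSpace ℂ ι → EuclideanSpace ℂ ι}
    (hG : G = groverReflection (uniformSuperposition S) ∘ groverOracle S') :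
    (r : ℝ) ≤ Real.pi / 4 * √(S.card / S'.card) ∧
    (1 : ℝ) - S'.card / S.card ≤
      ∑ i ∈ S', ‖⟪EuclideanSpace.single i (1 : ℂ), G^[r] (uniformSuperposition S)⟫_ℂ‖ ^ 2 ∧
    ∀ i ∉ S, ⟪EuclideanSpace.single i (1 : ℂ), G^[r] (uniformSuperposition S)⟫_ℂ = 0 := by
  change θ = groverAngle S' S at hθ
  have θ_pos : 0 < θ := hθ ▸ groverAngle_pos h hne
  have θ_le : θ ≤ Real.pi / 2 := hθ ▸ groverAngle_le_pi_div_two S' S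
  have sin_θ : Real.sin θ = √(S'.card / S.card) := hθ ▸ sin_groverAngle h
  have iterate_eq : G^[r] (uniformSuperposition S) = groverState S' S ((2 * r + 1) * θ) := by
    rw [hG, hθ, groverIterate_uniformSuperposition h (hne.mono h)]
  simp only [iterate_eq, EuclideanSpace.inner_single_left, map_one, one_mul]
  refine ⟨?_, ?_, fun i hi => groverState_apply_of_notMem h _ hi⟩
  · rw [← inv_div (S'.card : ℝ), Real.sqrt_inv, ← sin_θ, hr]
    exact floor_pi_div_four_mul_le θ_pos (by linarith [Real.pi_pos])
  · rw [sum_norm_sq_groverState S hne, ← Real.sq_sqrt (by positivity : (0 : ℝ) ≤ S'.card / S.card),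
      ← sin_θ, ← Real.cos_sq', hr]
    exact cos_sq_le_sin_sq_two_mul_floor_add_one_mul θ_pos θ_le

end Grover

/-- **Proposition 1 (Restricted Grover search).** -/
theorem restricted_grover_search
    (N : ℕ) (hN : 0 < N) (S' S : Finset (Fin N)) (hss : S' ⊂ S) (hne : S'.Nonempty)
    (θ : ℝ) (hθ : θ = Real.arcsin (Real.sqrt ((S'.card : ℝ) / S.card)))
    (r : ℕ) (hr : r = ⌊Real.pi / (4 * θ)⌋₊)
    (G : EuclideanSpace ℂ (Fin N) → EuclideanSpace ℂ (Fin N))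
    (hG : G = groverReflection (uniformSuperposition S) ∘ groverOracle S') :
    ((r : ℝ) ≤ Real.pi / 4 * Real.sqrt ((S.card : ℝ) / S'.card)) ∧
    ((1 : ℝ) - (S'.card : ℝ) / S.card ≤
      ∑ i ∈ S',
        ‖⟪EuclideanSpace.single i (1 : ℂ), G^[r] (uniformSuperposition S)⟫_ℂ‖ ^ 2) ∧
    (∀ i ∉ S, ⟪EuclideanSpace.single i (1 : ℂ), G^[r] (uniformSuperposition S)⟫_ℂ = 0) := by
  exact restricted_grover_search_general hss.subset hne hθ hr hG
end

section
/- Let θ be a real number with 0 < θ ≤ π/2 and set r = ⌊π/(4θ)⌋. Then sin²((2r+1)θ) ≥ cos²θ = 1 − sin²θ. Moreover, if sin θ = √(M/N) for integers 1 ≤ M ≤ N, then r ≤ (π/4)·√(N/M). -/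
/-!
The odd multiples of `θ` are spaced `2θ` apart, so one of them lies within `θ` of `π / 2`, and
`r = ⌊π / (4θ)⌋` selects such a multiple `(2r + 1)θ`. As cosine decreases on `[0, π]`, this gives
`cos θ ≤ cos ((2r + 1)θ - π / 2) = sin ((2r + 1)θ)`. The bound on `r` comes from `sin θ ≤ θ`.
-/

section OddMultiples

variable {K : Type*} [Field K] [LinearOrder K] [IsStrictOrderedRing K] [FloorSemiring K]

theorem abs_two_mul_floor_add_one_mul_sub_le {a θ : K} (ha : 0 ≤ a) (hθ : 0 < θ) :
    |(2 * ⌊a / (2 * θ)⌋₊ + 1) * θ - a| ≤ θ := by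
  have two_mul_pos : 0 < 2 * θ := by positivity
  have floor_mul_le : ⌊a / (2 * θ)⌋₊ * (2 * θ) ≤ a :=
    (le_div_iff₀ two_mul_pos).1 (Nat.floor_le (by positivity))
  have lt_floor_add_one_mul : a < (⌊a / (2 * θ)⌋₊ + 1) * (2 * θ) :=
    (div_lt_iff₀ two_mul_pos).1 (Nat.lt_floor_add_one _)
  rw [abs_le]
  constructor <;> linarith

end OddMultiples

section Grover

open Real

theorem cos_le_sin_of_abs_sub_pi_div_two_le {x y : ℝ} (hxy : |x - π / 2| ≤ y) (hy : y ≤ π) :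
    cos y ≤ sin x := by
  rw [← cos_sub_pi_div_two, ← cos_abs (x - π / 2)]
  exact cos_le_cos_of_nonneg_of_le_pi (abs_nonneg _) hy hxy

/-- The number `⌊π / (4θ)⌋` of iterations performed by Grover search, where `sin θ` is the
overlap of the initial state with the marked subspace. It is a natural number, so it takes the
junk value `0` for `θ ≤ 0`. -/
noncomputable def groverIterations (θ : ℝ) : ℕ := ⌊π / (4 * θ)⌋₊

variable {θ : ℝ}

theorem abs_groverIterations_angle_sub_pi_div_two_le (hθ : 0 < θ) :
    |(2 * groverIterations θ + 1) * θ - π / 2| ≤ θ := by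
  have quotient_eq : π / (4 * θ) = π / 2 / (2 * θ) := by
    rw [div_div]
    ring_nf
  rw [groverIterations, quotient_eq]
  exact abs_two_mul_floor_add_one_mul_sub_le (by positivity) hθ

theorem cos_le_sin_groverIterations_angle (hθ : 0 < θ) (hθπ : θ ≤ π) :
    cos θ ≤ sin ((2 * groverIterations θ + 1) * θ) :=
  cos_le_sin_of_abs_sub_pi_div_two_le (abs_groverIterations_angle_sub_pi_div_two_le hθ) hθπ

theorem groverIterations_le_pi_div_four_mul_inv_sin (hθ : 0 < θ) (hsin : 0 < sin θ) :
    groverIterations θ ≤ π / 4 * (sin θ)⁻¹ :=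
  calc
    (groverIterations θ : ℝ) ≤ π / (4 * θ) := Nat.floor_le (by positivity)
    _ = π / 4 * θ⁻¹ := by rw [← div_div, div_eq_mul_inv]
    _ ≤ π / 4 * (sin θ)⁻¹ := by
      gcongr
      exact sin_le hθ.le

end Grover

/-- **Iteration-count analysis for Grover search.** After `r = ⌊π/(4θ)⌋` Grover
iterations, the success probability `sin²((2r+1)θ)` is at least `cos²θ = 1 − sin²θ`,
and if `sin θ = √(M/N)` then `r ≤ (π/4)·√(N/M)`. -/
theorem grover_iteration_count (θ : ℝ) (hθ₁ : 0 < θ) (hθ₂ : θ ≤ Real.pi / 2)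
    (r : ℕ) (hr : r = ⌊Real.pi / (4 * θ)⌋₊) :
    (Real.cos θ ^ 2 ≤ Real.sin ((2 * r + 1) * θ) ^ 2) ∧
    (Real.cos θ ^ 2 = 1 - Real.sin θ ^ 2) ∧
    (∀ M N : ℕ, 1 ≤ M → M ≤ N → Real.sin θ = Real.sqrt ((M : ℝ) / N) →
      (r : ℝ) ≤ Real.pi / 4 * Real.sqrt ((N : ℝ) / M)) := by
  obtain rfl : r = groverIterations θ := hr
  refine ⟨?_, Real.cos_sq' θ, fun M N _ _ hsin => ?_⟩
  · have cos_nonneg : 0 ≤ Real.cos θ := Real.cos_nonneg_of_mem_Icc ⟨by linarith, hθ₂⟩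
    have cos_le_sin := cos_le_sin_groverIterations_angle hθ₁ (by linarith)
    gcongr
  · have sin_pos : 0 < Real.sin θ := Real.sin_pos_of_pos_of_lt_pi hθ₁ (by linarith)
    have sqrt_eq_inv_sin : Real.sqrt ((N : ℝ) / M) = (Real.sin θ)⁻¹ := by
      rw [hsin, ← Real.sqrt_inv, inv_div]
    rw [sqrt_eq_inv_sin]
    exact groverIterations_le_pi_div_four_mul_inv_sin hθ₁ sin_pos
end

section
/- Let N be a positive integer, S' ⊆ S ⊆ Fin N with S nonempty, ψ_S the uniform superposition over S, O_{S'} the oracle flipping the sign of basis states in S', and G = R_{ψ_S} ∘ O_{S'}. Then for every natural number r, the vector G^r ψ_S lies in the span of {e i : i ∈ S}; equivalently, ⟨e i, G^r ψ_S⟩ = 0 for every i ∉ S. Hence the evolution of the restricted Grover algorithm never leaves the subspace spanned by the restricted search space, and states outside S have zero probability of being measured. -/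
open scoped InnerProductSpace

/-!
The oracle is diagonal in the standard basis and the reflection about `ψ` moves a vector, up to
sign, only along `ψ`. Both therefore preserve the subspace spanned by the basis states in `S` as
soon as it contains `ψ`, and so does every iterate of their composition.
-/

section CoordinateSubspace

variable {𝕜 ι : Type*} [RCLike 𝕜] [DecidableEq ι] {S : Set ι} {x : EuclideanSpace 𝕜 ι}

variable (𝕜) in
/-- The coordinate subspace spanned by the basis states indexed by `S`, the state space of a search
restricted to `S`. -/
def coordinateSubspace (S : Set ι) : Submodule 𝕜 (EuclideanSpace 𝕜 ι) :=
  Submodule.span 𝕜 ((fun i => EuclideanSpace.single i (1 : 𝕜)) '' S)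

theorem single_mem_coordinateSubspace {i : ι} (hi : i ∈ S) :
    EuclideanSpace.single i (1 : 𝕜) ∈ coordinateSubspace 𝕜 S :=
  Submodule.subset_span (Set.mem_image_of_mem _ hi)

theorem mem_coordinateSubspace_iff_apply_eq_zero [Finite ι] :
    x ∈ coordinateSubspace 𝕜 S ↔ ∀ i ∉ S, x i = 0 := by
  cases nonempty_fintype ι
  have basis_eq : (fun i => EuclideanSpace.single i (1 : 𝕜)) =
      (EuclideanSpace.basisFun ι 𝕜).toBasis := by
    ext1 i
    simp
  rw [coordinateSubspace, basis_eq, Module.Basis.mem_span_image, Finsupp.support_subset_iff]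
  simp

theorem mem_coordinateSubspace_iff_inner_single_eq_zero [Fintype ι] :
    x ∈ coordinateSubspace 𝕜 S ↔ ∀ i ∉ S, ⟪EuclideanSpace.single i (1 : 𝕜), x⟫_𝕜 = 0 := by
  simp [mem_coordinateSubspace_iff_apply_eq_zero, EuclideanSpace.inner_single_left]

end CoordinateSubspace

section Grover

variable {ι : Type*} [Fintype ι]

theorem groverReflection_mem {p : Submodule ℂ (EuclideanSpace ℂ ι)} {ψ x : EuclideanSpace ℂ ι}
    (hψ : ψ ∈ p) (hx : x ∈ p) : groverReflection ψ x ∈ p :=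
  p.sub_mem (p.smul_mem _ (p.smul_mem _ hψ)) hx

variable [DecidableEq ι]

theorem uniformSuperposition_mem_coordinateSubspace (T : Finset ι) :
    uniformSuperposition T ∈ coordinateSubspace ℂ (T : Set ι) :=
  Submodule.smul_of_tower_mem _ _ <|
    Submodule.sum_mem _ fun _ hi => single_mem_coordinateSubspace hi

variable {S : Set ι} {ψ x : EuclideanSpace ℂ ι}

theorem groverOracle_mem_coordinateSubspace (S' : Finset ι) (hx : x ∈ coordinateSubspace ℂ S) :
    groverOracle S' x ∈ coordinateSubspace ℂ S := by
  rw [mem_coordinateSubspace_iff_apply_eq_zero] at hx ⊢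
  intro i hi
  simp [groverOracle, hx i hi]

theorem mapsTo_groverReflection_comp_groverOracle (S' : Finset ι)
    (hψ : ψ ∈ coordinateSubspace ℂ S) :
    Set.MapsTo (groverReflection ψ ∘ groverOracle S')
      (coordinateSubspace ℂ S) (coordinateSubspace ℂ S) :=
  fun _ hx => groverReflection_mem hψ (groverOracle_mem_coordinateSubspace S' hx)

theorem restricted_grover_stays_in_span_general (S' : Finset ι)
    (hψ : ψ ∈ coordinateSubspace ℂ S) (hx : x ∈ coordinateSubspace ℂ S) (r : ℕ) :
    (groverReflection ψ ∘ groverOracle S')^[r] x ∈ coordinateSubspace ℂ S ∧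
      ∀ i ∉ S, ⟪EuclideanSpace.single i (1 : ℂ),
        (groverReflection ψ ∘ groverOracle S')^[r] x⟫_ℂ = 0 := by
  have iterate_mem := (mapsTo_groverReflection_comp_groverOracle S' hψ).iterate r hx
  exact ⟨iterate_mem, mem_coordinateSubspace_iff_inner_single_eq_zero.mp iterate_mem⟩

end Grover

/-- The evolution of the restricted Grover algorithm never leaves the subspace spanned
by the restricted search space `S`. -/
theorem restricted_grover_stays_in_span
    (N : ℕ) (hN : 0 < N) (S' S : Finset (Fin N)) (hss : S' ⊆ S) (hSne : S.Nonempty)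
    (G : EuclideanSpace ℂ (Fin N) → EuclideanSpace ℂ (Fin N))
    (hG : G = groverReflection (uniformSuperposition S) ∘ groverOracle S') :
    ∀ r : ℕ,
      G^[r] (uniformSuperposition S) ∈
        Submodule.span ℂ ((fun i => EuclideanSpace.single i (1 : ℂ)) '' (S : Set (Fin N))) ∧
      ∀ i ∉ S, ⟪EuclideanSpace.single i (1 : ℂ), G^[r] (uniformSuperposition S)⟫_ℂ = 0 := by
  subst hG
  have hψ := uniformSuperposition_mem_coordinateSubspace S
  exact restricted_grover_stays_in_span_general S' hψ hψ
end
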